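/- arXiv:1911.04964 — 7 statements merged into one kernel-verified Lean document; each statement's English description precedes it below -/
import Mathlib

section
/- Conservation of Bias: Let D be a probability distribution over a set F of information resources and let τ_k denote the collection of all target sets t ⊆ Ω with |t| = k. Then for any fixed assignment f ↦ P̄_f of averaged probability distributions, ∑_{t ∈ τ_k} bias(D, t) = 0. -/
open MeasureTheory

/-!
Each point of an `n`-set lies in `C(n - 1, k - 1)` of its `C(n, k)` subsets of size `k`. Since
`C(n, k) * k / n = C(n - 1, k - 1)`, the sums of a vector-valued function over these subsets average
to `k / n` times its total. Integration preserves this identity by linearity.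
-/

section PowersetCard

open Finset

theorem sum_powersetCard_add_one_sum {α M : Type*} [AddCommMonoid M] (s : Finset α) (k : ℕ)
    (g : α → M) :
    ∑ t ∈ s.powersetCard (k + 1), ∑ a ∈ t, g a = (#s - 1).choose k • ∑ a ∈ s, g a := by
  classical
  have card_containing (a : α) (ha : a ∈ s) :
      #{t ∈ s.powersetCard (k + 1) | a ∈ t} = (#s - 1).choose k := by
    simpa using card_filter_powersetCard_subset {a} s (k + 1) (by simpa using ha) (by simp)
  calc ∑ t ∈ s.powersetCard (k + 1), ∑ a ∈ t, g a
      = ∑ a ∈ s, ∑ t ∈ s.powersetCard (k + 1) with a ∈ t, g a :=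
        sum_comm' fun t a => by grind
    _ = ∑ a ∈ s, (#s - 1).choose k • g a :=
        sum_congr rfl fun a ha => by rw [sum_const, card_containing a ha]
    _ = (#s - 1).choose k • ∑ a ∈ s, g a := (smul_sum ..).symm

theorem choose_add_one_mul_add_one_div {K : Type*} [DivisionRing K] [CharZero K] {n : ℕ}
    (hn : n ≠ 0) (k : ℕ) : (n.choose (k + 1) : K) * ((k + 1 : ℕ) / n) = (n - 1).choose k := by
  obtain ⟨m, rfl⟩ := Nat.exists_eq_add_one_of_ne_zero hn
  rw [← mul_div_assoc, div_eq_iff (Nat.cast_ne_zero.mpr hn), Nat.add_sub_cancel]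
  exact_mod_cast (Nat.add_one_mul_choose_eq m k).symm.trans (Nat.mul_comm ..)

theorem sum_powersetCard_sum_sub_smul_sum_eq_zero (K : Type*) {α M : Type*} [DivisionRing K]
    [CharZero K] [AddCommGroup M] [Module K M] (s : Finset α) (k : ℕ) (g : α → M) :
    ∑ t ∈ s.powersetCard k, (∑ a ∈ t, g a - ((k : K) / #s) • ∑ a ∈ s, g a) = 0 := by
  obtain rfl | hs := s.eq_empty_or_nonempty
  · exact sum_eq_zero fun t ht => by simp [subset_empty.mp (mem_powersetCard.mp ht).1]
  cases k with
  | zero => simp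
  | succ k =>
    rw [sum_sub_distrib, sum_powersetCard_add_one_sum, sum_const, card_powersetCard,
      ← Nat.cast_smul_eq_nsmul K, ← Nat.cast_smul_eq_nsmul K, smul_smul,
      choose_add_one_mul_add_one_div hs.card_ne_zero, sub_self]

end PowersetCard

theorem conservation_of_bias_general {Ω F E : Type*} [Fintype Ω] [MeasurableSpace F]
    [NormedAddCommGroup E] [NormedSpace ℝ E] [CompleteSpace E] (P : F → Ω → E) (μ : Measure F)
    (hint : ∀ ω, Integrable (fun f => P f ω) μ) (k : ℕ) :
    ∑ t ∈ Finset.powersetCard k (Finset.univ : Finset Ω),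
      ((∫ f, ∑ ω ∈ t, P f ω ∂μ) - ((k : ℝ) / Fintype.card Ω) • ∫ f, ∑ ω, P f ω ∂μ) = 0 := by
  simp only [integral_finsetSum _ fun ω _ => hint ω]
  exact sum_powersetCard_sum_sub_smul_sum_eq_zero ℝ Finset.univ k fun ω => ∫ f, P f ω ∂μ

/-- **Conservation of Bias.**
For any fixed assignment `f ↦ P̄_f` and any distribution `D` over information
resources, the biases over all size-`k` target sets sum to zero:
`∑_{t ∈ τ_k} bias(D,t) = 0`, where `bias(D,t) = E_D[∑ ω ∈ t, P̄_F ω] - k/|Ω|`. -/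
theorem conservation_of_bias
    {Ω F : Type*} [Fintype Ω] [MeasurableSpace F]
    (Pbar : F → Ω → ℝ)
    (hP0 : ∀ f ω, 0 ≤ Pbar f ω)
    (hP1 : ∀ f, ∑ ω, Pbar f ω = 1)
    (D : Measure F) [IsProbabilityMeasure D]
    (hint : ∀ ω, Integrable (fun f => Pbar f ω) D)
    (k : ℕ) (hk1 : 1 ≤ k) (hk2 : k ≤ Fintype.card Ω) :
    ∑ t ∈ Finset.powersetCard k (Finset.univ : Finset Ω),
      ((∫ f, (∑ ω ∈ t, Pbar f ω) ∂D) - (k : ℝ) / (Fintype.card Ω)) = 0 := by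
  simpa [hP1] using conservation_of_bias_general Pbar D hint k
end

section
/- Famine of Favorable Information Resources: Let B be a finite nonempty set of information resources, let t ⊆ Ω be a fixed target set with |t| = k, and for q_min ∈ (0,1] define B_{q_min} = { f ∈ B : q(t,f) ≥ q_min }. Then |B_{q_min}| / |B| ≤ (p + bias(B, t)) / q_min, where p = k/|Ω|. -/
/-!
The baseline `p` cancels in `p + bias`, leaving the mean of `q(t, f)` over `f` uniform in `B`;
the bound is then Markov's inequality for this mean.
-/

open scoped Classical

section Markov

variable {ι : Type*} {s : Finset ι}

theorem card_filter_le_nsmul_le_sum {M : Type*} [AddCommMonoid M] [Preorder M] [AddLeftMono M]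
    {f : ι → M} (hf : ∀ i ∈ s, 0 ≤ f i) (c : M) [DecidablePred fun i => c ≤ f i] :
    (s.filter fun i => c ≤ f i).card • c ≤ ∑ i ∈ s, f i :=
  calc (s.filter fun i => c ≤ f i).card • c
      ≤ ∑ i ∈ s.filter fun i => c ≤ f i, f i :=
        Finset.card_nsmul_le_sum _ _ _ fun _ hi => (Finset.mem_filter.mp hi).2
    _ ≤ ∑ i ∈ s, f i :=
        Finset.sum_le_sum_of_subset_of_nonneg (Finset.filter_subset _ _) fun i hi _ => hf i hi

theorem card_filter_le_div_card_le_average_div {𝕜 : Type*} [Field 𝕜] [LinearOrder 𝕜]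
    [IsStrictOrderedRing 𝕜] {f : ι → 𝕜} (hf : ∀ i ∈ s, 0 ≤ f i) {c : 𝕜} (hc : 0 < c) :
    ((s.filter fun i => c ≤ f i).card : 𝕜) / s.card ≤ (∑ i ∈ s, f i) / s.card / c := by
  have markov : ((s.filter fun i => c ≤ f i).card : 𝕜) * c ≤ ∑ i ∈ s, f i := by
    simpa only [nsmul_eq_mul] using card_filter_le_nsmul_le_sum hf c
  rw [div_right_comm]
  gcongr
  exact (le_div_iff₀ hc).mpr markov

end Markov

theorem famine_of_favorable_information_resources_general
    {𝕜 Ω F : Type*} [Field 𝕜] [LinearOrder 𝕜] [IsStrictOrderedRing 𝕜] [Fintype Ω]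
    (Pbar : F → Ω → 𝕜)
    (B : Finset F) (hB : B.Nonempty)
    (t : Finset Ω) (hq : ∀ f ∈ B, 0 ≤ ∑ ω ∈ t, Pbar f ω)
    (k : ℕ) (hk : t.card = k)
    (qmin : 𝕜) (hqmin : 0 < qmin)
    (p bias : 𝕜)
    (hp : p = (k : 𝕜) / (Fintype.card Ω))
    (hbias : bias = (1 / (B.card : 𝕜)) * (∑ f ∈ B, ∑ ω ∈ t, Pbar f ω) - p) :
    ((B.filter fun f => qmin ≤ ∑ ω ∈ t, Pbar f ω).card : 𝕜) / (B.card : 𝕜)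
      ≤ (p + bias) / qmin := by
  have mean_eq : p + bias = (∑ f ∈ B, ∑ ω ∈ t, Pbar f ω) / (B.card : 𝕜) := by
    rw [hbias, add_sub_cancel, one_div_mul_eq_div]
  rw [mean_eq]
  exact card_filter_le_div_card_le_average_div hq hqmin

/-- **Famine of Favorable Information Resources.**
For a finite nonempty set `B` of information resources and a fixed target set
`t` of size `k`, the proportion of `f ∈ B` with `q(t,f) ≥ q_min` is at most
`(p + bias(B,t))/q_min`, where `bias(B,t) = (1/|B|)∑_{f∈B} q(t,f) - p` and
`p = k/|Ω|`. -/
theorem famine_of_favorable_information_resources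
    {Ω F : Type*} [Fintype Ω]
    (Pbar : F → Ω → ℝ)
    (hP0 : ∀ f ω, 0 ≤ Pbar f ω)
    (hP1 : ∀ f, ∑ ω, Pbar f ω = 1)
    (B : Finset F) (hB : B.Nonempty)
    (t : Finset Ω) (k : ℕ) (hk : t.card = k)
    (qmin : ℝ) (hqmin : qmin ∈ Set.Ioc (0 : ℝ) 1)
    (p bias : ℝ)
    (hp : p = (k : ℝ) / (Fintype.card Ω))
    (hbias : bias = (1 / (B.card : ℝ)) * (∑ f ∈ B, ∑ ω ∈ t, Pbar f ω) - p) :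
    ((B.filter fun f => qmin ≤ ∑ ω ∈ t, Pbar f ω).card : ℝ) / (B.card : ℝ)
      ≤ (p + bias) / qmin :=
  famine_of_favorable_information_resources_general Pbar B hB t
    (fun f _ => Finset.sum_nonneg fun ω _ => hP0 f ω) k hk qmin hqmin.1 p bias hp hbias
end

section
/- Proportion of Successful Problems Under Bias-Free Search: Let B be a finite nonempty set of information resources and t ⊆ Ω a fixed target set with |t| = k. If bias(B, t) = 0, then for any q_min ∈ (0,1], |{ f ∈ B : q(t,f) ≥ q_min }| / |B| ≤ p / q_min, where p = k/|Ω|. -/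
open scoped Classical

/-!
By definition of the bias, the average of `q(t, f)` over `f ∈ B` is `p + bias(B, t)`. Markov's
inequality for the nonnegative function `f ↦ q(t, f)` under the uniform distribution on `B` then
bounds the proportion of `f` with `q(t, f) ≥ q_min` by `(p + bias(B, t)) / q_min`.
-/

theorem card_filter_nsmul_le_sum {ι M : Type*} [AddCommMonoid M] [PartialOrder M]
    [IsOrderedAddMonoid M] (s : Finset ι) (g : ι → M) (a : M)
    [DecidablePred fun i => a ≤ g i] (hg : ∀ i ∈ s, 0 ≤ g i) :
    (s.filter fun i => a ≤ g i).card • a ≤ ∑ i ∈ s, g i :=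
  calc (s.filter fun i => a ≤ g i).card • a
      ≤ ∑ i ∈ s.filter fun i => a ≤ g i, g i :=
        Finset.card_nsmul_le_sum _ g a fun _ hi => (Finset.mem_filter.mp hi).2
    _ ≤ ∑ i ∈ s, g i :=
        Finset.sum_le_sum_of_subset_of_nonneg (Finset.filter_subset _ s) fun i hi _ => hg i hi

-- Here `p` is an arbitrary baseline; `p = |t| / |Ω|` is the success rate of uniform sampling.
theorem proportion_of_successful_problems_under_bias_free_search_general
    {Ω F : Type*} (Pbar : F → Ω → ℝ)
    (B : Finset F) (hB : B.Nonempty) (t : Finset Ω)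
    (hP0 : ∀ f ∈ B, ∀ ω ∈ t, 0 ≤ Pbar f ω)
    (qmin : ℝ) (hqmin : 0 < qmin) (p bias : ℝ)
    (hbias : bias = (1 / (B.card : ℝ)) * (∑ f ∈ B, ∑ ω ∈ t, Pbar f ω) - p) :
    ((B.filter fun f => qmin ≤ ∑ ω ∈ t, Pbar f ω).card : ℝ) / (B.card : ℝ)
      ≤ (p + bias) / qmin := by
  have hcard : (0 : ℝ) < B.card := Nat.cast_pos.mpr hB.card_pos
  have htotal : ∑ f ∈ B, ∑ ω ∈ t, Pbar f ω = (p + bias) * B.card := by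
    rw [hbias]
    field_simp
    ring
  rw [div_le_div_iff₀ hcard hqmin, ← htotal, ← nsmul_eq_mul]
  exact card_filter_nsmul_le_sum B _ qmin fun f hf => Finset.sum_nonneg (hP0 f hf)

/-- **Proportion of Successful Problems Under Bias-Free Search.**
If `bias(B,t) = 0`, the proportion of `f ∈ B` with `q(t,f) ≥ q_min` is at most
`p / q_min`, where `p = k/|Ω|`. -/
theorem proportion_of_successful_problems_under_bias_free_search
    {Ω F : Type*} [Fintype Ω]
    (Pbar : F → Ω → ℝ)
    (hP0 : ∀ f ω, 0 ≤ Pbar f ω)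
    (hP1 : ∀ f, ∑ ω, Pbar f ω = 1)
    (B : Finset F) (hB : B.Nonempty)
    (t : Finset Ω) (k : ℕ) (hk : t.card = k)
    (qmin : ℝ) (hqmin : qmin ∈ Set.Ioc (0 : ℝ) 1)
    (p bias : ℝ)
    (hp : p = (k : ℝ) / (Fintype.card Ω))
    (hbias : bias = (1 / (B.card : ℝ)) * (∑ f ∈ B, ∑ ω ∈ t, Pbar f ω) - p)
    (hbias0 : bias = 0) :
    ((B.filter fun f => qmin ≤ ∑ ω ∈ t, Pbar f ω).card : ℝ) / (B.card : ℝ)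
      ≤ p / qmin := by
  simpa only [hbias0, add_zero] using
    proportion_of_successful_problems_under_bias_free_search_general
      Pbar B hB t (fun f _ ω _ => hP0 f ω) qmin hqmin.1 p bias hbias
end

section
/- Famine of Applicable Targets: Let D be a probability distribution over a set of information resources. Let τ_k = { t ⊆ Ω : |t| = k } and, for q_min ∈ (0,1], let τ_{q_min} = { t ∈ τ_k : bias(D, t) ≥ q_min }. Then |τ_{q_min}| / |τ_k| ≤ p/(p + q_min) ≤ p/q_min, where p = k/|Ω|. -/
/-!
Averaging over `D` turns `P̄_F` into one probability distribution `g` on `Ω`, and by linearity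
`bias(D, t) = ∑_{ω ∈ t} g ω - p`. For a uniformly random `k`-subset `t`, every point of `Ω` lies
in `t` with the same probability `p = k / n`, so `∑_{ω ∈ t} g ω` has mean `p`. A favorable target
is one at which this nonnegative quantity is at least `p + q_min`, and Markov's inequality bounds
the proportion of such targets by `p / (p + q_min)`.
-/

open MeasureTheory
open scoped Classical

open Finset
open scoped BigOperators

section SubsetSums

variable {α M : Type*}

lemma card_filter_mem_powersetCard_succ [DecidableEq α] {s : Finset α} {a : α} (ha : a ∈ s)
    (k : ℕ) : #{t ∈ s.powersetCard (k + 1) | a ∈ t} = (#s - 1).choose k := by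
  simpa using card_filter_powersetCard_subset {a} s (k + 1) (by simpa using ha) (by simp)

lemma sum_powersetCard_succ_sum [AddCommMonoid M] (s : Finset α) (k : ℕ) (g : α → M) :
    ∑ t ∈ s.powersetCard (k + 1), ∑ a ∈ t, g a = (#s - 1).choose k • ∑ a ∈ s, g a := by
  calc
    ∑ t ∈ s.powersetCard (k + 1), ∑ a ∈ t, g a
        = ∑ a ∈ s, ∑ t ∈ s.powersetCard (k + 1) with a ∈ t, g a :=
      sum_comm' fun t a => by grind
    _ = ∑ a ∈ s, (#s - 1).choose k • g a :=
      sum_congr rfl fun a ha => by rw [sum_const, card_filter_mem_powersetCard_succ ha]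
    _ = (#s - 1).choose k • ∑ a ∈ s, g a := (smul_sum ..).symm

lemma card_nsmul_sum_powersetCard_sum [AddCommMonoid M] (s : Finset α) (k : ℕ) (g : α → M) :
    #s • ∑ t ∈ s.powersetCard k, ∑ a ∈ t, g a = ((#s).choose k * k) • ∑ a ∈ s, g a := by
  obtain rfl | hs := s.eq_empty_or_nonempty
  · cases k <;> simp
  cases k with
  | zero => simp
  | succ k =>
    have hchoose := Nat.add_one_mul_choose_eq (#s - 1) k
    rw [Nat.sub_add_cancel hs.card_pos] at hchoose
    rw [sum_powersetCard_succ_sum, smul_smul, hchoose]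

lemma expect_powersetCard_sum [AddCommMonoid M] [Module ℚ≥0 M] {s : Finset α} {k : ℕ}
    (hk : k ≤ #s) (g : α → M) :
    𝔼 t ∈ s.powersetCard k, ∑ a ∈ t, g a = k • 𝔼 a ∈ s, g a := by
  have hchoose : ((#s).choose k : ℚ≥0) ≠ 0 := by exact_mod_cast (Nat.choose_pos hk).ne'
  obtain rfl | hs := s.eq_empty_or_nonempty
  · obtain rfl : k = 0 := by simpa using hk
    simp
  have hcard : (#s : ℚ≥0) ≠ 0 := by exact_mod_cast hs.card_pos.ne'
  have hsum : ∑ t ∈ s.powersetCard k, ∑ a ∈ t, g a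
      = ((#s : ℚ≥0)⁻¹ * ((#s).choose k * k)) • ∑ a ∈ s, g a := by
    rw [mul_smul, eq_inv_smul_iff₀ hcard]
    exact_mod_cast card_nsmul_sum_powersetCard_sum s k g
  rw [expect, expect, hsum, card_powersetCard, ← Nat.cast_smul_eq_nsmul ℚ≥0 k, smul_smul,
    smul_smul]
  congr 1
  field_simp

end SubsetSums

section Markov

variable {ι K : Type*} [Semifield K] [LinearOrder K] [IsStrictOrderedRing K]

lemma card_filter_le_div_card_le_expect_div {s : Finset ι} {f : ι → K} {c : K}
    (hf : ∀ i ∈ s, 0 ≤ f i) (hc : 0 < c) :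
    (#{i ∈ s | c ≤ f i} / #s : K) ≤ (𝔼 i ∈ s, f i) / c := by
  have hsum : #{i ∈ s | c ≤ f i} * c ≤ ∑ i ∈ s, f i := by
    calc
      #{i ∈ s | c ≤ f i} * c = #{i ∈ s | c ≤ f i} • c := (nsmul_eq_mul ..).symm
      _ ≤ ∑ i ∈ s with c ≤ f i, f i := card_nsmul_le_sum _ _ _ fun i hi => (mem_filter.1 hi).2
      _ ≤ ∑ i ∈ s, f i :=
        sum_le_sum_of_subset_of_nonneg (filter_subset _ _) fun i hi _ => hf i hi
  rw [expect_eq_sum_div_card, div_right_comm]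
  gcongr
  rwa [le_div_iff₀ hc]

lemma card_filter_le_sum_div_card_powersetCard_le {s : Finset ι} {k : ℕ} (hk : k ≤ #s)
    {g : ι → K} (hg : ∀ i ∈ s, 0 ≤ g i) {c : K} (hc : 0 < c) :
    (#{t ∈ s.powersetCard k | c ≤ ∑ i ∈ t, g i} / #(s.powersetCard k) : K)
      ≤ (k • 𝔼 i ∈ s, g i) / c := by
  rw [← expect_powersetCard_sum hk]
  refine card_filter_le_div_card_le_expect_div (fun t ht => ?_) hc
  exact sum_nonneg fun i hi => hg i ((mem_powersetCard.1 ht).1 hi)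

end Markov

/-- **Famine of Applicable Targets.**
With `τ_k` the collection of all size-`k` target sets and
`τ_{q_min} = {t ∈ τ_k : bias(D,t) ≥ q_min}`, we have
`|τ_{q_min}|/|τ_k| ≤ p/(p + q_min) ≤ p/q_min`, where `p = k/|Ω|`. -/
theorem famine_of_applicable_targets
    {Ω F : Type*} [Fintype Ω] [MeasurableSpace F]
    (Pbar : F → Ω → ℝ)
    (hP0 : ∀ f ω, 0 ≤ Pbar f ω)
    (hP1 : ∀ f, ∑ ω, Pbar f ω = 1)
    (D : Measure F) [IsProbabilityMeasure D]
    (hint : ∀ ω, Integrable (fun f => Pbar f ω) D)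
    (k : ℕ) (hk1 : 1 ≤ k) (hk2 : k ≤ Fintype.card Ω)
    (qmin : ℝ) (hqmin : qmin ∈ Set.Ioc (0 : ℝ) 1)
    (p : ℝ) (hp : p = (k : ℝ) / (Fintype.card Ω)) :
    (((Finset.powersetCard k (Finset.univ : Finset Ω)).filter fun t =>
        qmin ≤ (∫ f, (∑ ω ∈ t, Pbar f ω) ∂D) - p).card : ℝ) /
      ((Finset.powersetCard k (Finset.univ : Finset Ω)).card : ℝ)
        ≤ p / (p + qmin)
    ∧ p / (p + qmin) ≤ p / qmin := by
  have hq : 0 < qmin := hqmin.1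
  have hp0 : 0 ≤ p := hp ▸ by positivity
  have hsuccess (t : Finset Ω) : ∫ f, ∑ ω ∈ t, Pbar f ω ∂D = ∑ ω ∈ t, ∫ f, Pbar f ω ∂D :=
    integral_finsetSum t fun ω _ => hint ω
  have htotal : ∑ ω, ∫ f, Pbar f ω ∂D = 1 := by simp [← hsuccess, hP1]
  have hmean : k • 𝔼 ω, ∫ f, Pbar f ω ∂D = p := by
    rw [Fintype.expect_eq_sum_div_card, htotal, hp, nsmul_eq_mul, mul_one_div]
  refine ⟨?_, div_le_div_of_nonneg_left hp0 hq (by linarith)⟩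
  simp only [hsuccess, le_sub_iff_add_le']
  calc
    _ ≤ (k • 𝔼 ω, ∫ f, Pbar f ω ∂D) / (p + qmin) :=
      card_filter_le_sum_div_card_powersetCard_le hk2
        (fun ω _ => integral_nonneg fun f => hP0 f ω) (by linarith)
    _ = p / (p + qmin) := by rw [hmean]
end

section
/- Famine of Favorable Biasing Distributions: Let B be a finite set of information resources with |B| = m, let t ⊆ Ω be a fixed target set with |t| = k, and let P = { D ∈ ℝ^m : D(f) ≥ 0 for all f ∈ B, ∑_{f∈B} D(f) = 1 } be the standard simplex of distributions over B, equipped with the (m−1)-dimensional Lebesgue measure μ on the affine hyperplane containing P. For q_min ∈ (0,1], let G_{t,q_min} = { D ∈ P : bias(D, t) ≥ q_min }. Then μ(G_{t,q_min}) / μ(P) ≤ (p + bias(B, t)) / q_min, where p = k/|Ω|. -/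
/-!
This is Markov's inequality on the simplex. A permutation of the coordinates is an isometry of
Euclidean space that maps the simplex to itself, so it preserves the Hausdorff measure there. Hence
all coordinates have the same integral over the simplex, and as they sum to `1` that integral is
`μ(P) / m`: the average over `D ∈ P` of the success probability `∑ f, D f * q(t, f)` is
`(1 / m) * ∑ f, q(t, f) = p + bias(B, t)`. Favorable `D` have success probability at least
`p + qmin ≥ qmin`.
-/

open MeasureTheory

open scoped ENNReal

/-- A measure on a power `ι → α` is exchangeable if every permutation of the coordinates preserves
it: the symmetry of Lebesgue measure on the simplex that drives the averaging argument. Total mass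
is not normalized, so that Hausdorff measures qualify; for infinite `ι` all permutations count, not
only the finitely supported ones. -/
def IsExchangeable {ι α : Type*} [MeasurableSpace α] (ν : Measure (ι → α)) : Prop :=
  ∀ σ : Equiv.Perm ι, MeasurePreserving (fun x ↦ x ∘ σ) ν ν

theorem isExchangeable_map_ofLp_hausdorffMeasure (ι : Type*) [Fintype ι] (d : ℝ) :
    IsExchangeable ((μH[d] : Measure (EuclideanSpace ℝ ι)).map WithLp.ofLp) := by
  intro σ
  let e := (LinearIsometryEquiv.piLpCongrLeft 2 ℝ ℝ σ.symm).toIsometryEquiv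
  have he : (fun x ↦ x ∘ σ) ∘ WithLp.ofLp = WithLp.ofLp ∘ e := by
    ext x i
    simp [e, LinearIsometryEquiv.piLpCongrLeft_apply, Equiv.piCongrLeft'_apply]
  have hofLp : Measurable (WithLp.ofLp : EuclideanSpace ℝ ι → ι → ℝ) := by fun_prop
  have hperm : Measurable fun x : ι → ℝ ↦ x ∘ σ := by fun_prop
  refine ⟨hperm, ?_⟩
  rw [Measure.map_map hperm hofLp, he, ← Measure.map_map hofLp e.continuous.measurable,
    (e.measurePreserving_hausdorffMeasure d).map_eq]

theorem map_ofLp_apply {p : ℝ≥0∞} {X : Type*} [MeasurableSpace X] (μ : Measure (WithLp p X))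
    (s : Set X) : μ.map WithLp.ofLp s = μ (WithLp.ofLp ⁻¹' s) :=
  (MeasurableEquiv.toLp p X).symm.map_apply s

theorem measurableSet_stdSimplex (ι : Type*) [Fintype ι] : MeasurableSet (stdSimplex ℝ ι) :=
  (isClosed_stdSimplex ℝ ι).measurableSet

theorem comp_perm_preimage_stdSimplex {ι : Type*} [Fintype ι] (σ : Equiv.Perm ι) :
    (fun x ↦ x ∘ σ) ⁻¹' stdSimplex ℝ ι = stdSimplex ℝ ι := by
  ext x
  have hnonneg : (∀ i, 0 ≤ x (σ i)) ↔ ∀ i, 0 ≤ x i := σ.forall_congr_right (q := fun i ↦ 0 ≤ x i)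
  have hsum : ∑ i, x (σ i) = ∑ i, x i := Equiv.sum_comp σ x
  exact and_congr hnonneg (by simp only [Function.comp_apply, hsum])

namespace IsExchangeable

theorem lintegral_eval_eq {ι α : Type*} [MeasurableSpace α] {ν : Measure (ι → α)}
    (hν : IsExchangeable ν) {φ : α → ℝ≥0∞} (hφ : Measurable φ) (i j : ι) :
    ∫⁻ x, φ (x i) ∂ν = ∫⁻ x, φ (x j) ∂ν := by
  classical
  simpa using (hν (Equiv.swap i j)).lintegral_comp (hφ.comp (measurable_pi_apply j))

variable {ι : Type*} [Fintype ι] {ν : Measure (ι → ℝ)}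

theorem restrict_stdSimplex (hν : IsExchangeable ν) :
    IsExchangeable (ν.restrict (stdSimplex ℝ ι)) := fun σ ↦ by
  simpa only [comp_perm_preimage_stdSimplex] using
    (hν σ).restrict_preimage (measurableSet_stdSimplex ι)

theorem lintegral_stdSimplex_eval (hν : IsExchangeable ν) (i : ι) :
    ∫⁻ x in stdSimplex ℝ ι, ENNReal.ofReal (x i) ∂ν
      = ENNReal.ofReal (1 / Fintype.card ι) * ν (stdSimplex ℝ ι) := by
  have : Nonempty ι := ⟨i⟩
  have hcard : ENNReal.ofReal (1 / Fintype.card ι) * Fintype.card ι = 1 := by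
    rw [← ENNReal.ofReal_natCast, ← ENNReal.ofReal_mul (by positivity),
      one_div_mul_cancel (by positivity), ENNReal.ofReal_one]
  have hsum : Fintype.card ι * ∫⁻ x in stdSimplex ℝ ι, ENNReal.ofReal (x i) ∂ν
      = ν (stdSimplex ℝ ι) := calc
    _ = ∑ j, ∫⁻ x in stdSimplex ℝ ι, ENNReal.ofReal (x j) ∂ν := by
      simp [hν.restrict_stdSimplex.lintegral_eval_eq ENNReal.measurable_ofReal _ i]
    _ = ∫⁻ x in stdSimplex ℝ ι, ∑ j, ENNReal.ofReal (x j) ∂ν :=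
      (lintegral_finsetSum _ fun j _ ↦ by fun_prop).symm
    _ = ∫⁻ _ in stdSimplex ℝ ι, 1 ∂ν :=
      setLIntegral_congr_fun (measurableSet_stdSimplex ι) fun x hx ↦ by
        simp only [← ENNReal.ofReal_sum_of_nonneg fun j _ ↦ hx.1 j, hx.2, ENNReal.ofReal_one]
    _ = ν (stdSimplex ℝ ι) := setLIntegral_one _
  rw [← hsum, ← mul_assoc, hcard, one_mul]

theorem lintegral_stdSimplex_sum_mul (hν : IsExchangeable ν) {q : ι → ℝ} (hq : ∀ i, 0 ≤ q i) :
    ∫⁻ x in stdSimplex ℝ ι, ENNReal.ofReal (∑ i, x i * q i) ∂ν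
      = ENNReal.ofReal (1 / Fintype.card ι * ∑ i, q i) * ν (stdSimplex ℝ ι) := calc
  _ = ∫⁻ x in stdSimplex ℝ ι, ∑ i, ENNReal.ofReal (x i) * ENNReal.ofReal (q i) ∂ν :=
    setLIntegral_congr_fun (measurableSet_stdSimplex ι) fun x hx ↦ by
      simp only [ENNReal.ofReal_sum_of_nonneg fun i _ ↦ mul_nonneg (hx.1 i) (hq i),
        ENNReal.ofReal_mul (hx.1 _)]
  _ = ∑ i, (∫⁻ x in stdSimplex ℝ ι, ENNReal.ofReal (x i) ∂ν) * ENNReal.ofReal (q i) := by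
    rw [lintegral_finsetSum _ fun i _ ↦ by fun_prop]
    exact Finset.sum_congr rfl fun i _ ↦ lintegral_mul_const _ (by fun_prop)
  _ = ENNReal.ofReal (1 / Fintype.card ι) * ν (stdSimplex ℝ ι) * ENNReal.ofReal (∑ i, q i) := by
    simp only [hν.lintegral_stdSimplex_eval, ← Finset.mul_sum,
      ENNReal.ofReal_sum_of_nonneg fun i _ ↦ hq i]
  _ = _ := by rw [ENNReal.ofReal_mul (by positivity), mul_right_comm]

theorem measure_stdSimplex_ge_div_le (hν : IsExchangeable ν) {q : ι → ℝ} (hq : ∀ i, 0 ≤ q i)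
    {ε : ℝ} (hε : 0 < ε) :
    ν {x ∈ stdSimplex ℝ ι | ε ≤ ∑ i, x i * q i} / ν (stdSimplex ℝ ι)
      ≤ ENNReal.ofReal (1 / Fintype.card ι * (∑ i, q i) / ε) := by
  have hsub : {x ∈ stdSimplex ℝ ι | ε ≤ ∑ i, x i * q i} ⊆
      {x | ENNReal.ofReal ε ≤ ENNReal.ofReal (∑ i, x i * q i)} ∩ stdSimplex ℝ ι :=
    fun x hx ↦ ⟨ENNReal.ofReal_le_ofReal hx.2, hx.1⟩
  refine ENNReal.div_le_of_le_mul ?_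
  calc
    _ ≤ ν.restrict (stdSimplex ℝ ι)
          {x | ENNReal.ofReal ε ≤ ENNReal.ofReal (∑ i, x i * q i)} :=
      (measure_mono hsub).trans_eq (Measure.restrict_apply' (measurableSet_stdSimplex ι)).symm
    _ ≤ (∫⁻ x in stdSimplex ℝ ι, ENNReal.ofReal (∑ i, x i * q i) ∂ν) / ENNReal.ofReal ε :=
      meas_ge_le_lintegral_div (Measurable.aemeasurable (by fun_prop))
        (ENNReal.ofReal_pos.2 hε).ne' ENNReal.ofReal_ne_top
    _ = _ := by
      rw [hν.lintegral_stdSimplex_sum_mul hq, ENNReal.ofReal_div_of_pos hε,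
        ENNReal.mul_div_right_comm]

end IsExchangeable

-- In the degenerate cases where the simplex has measure `0` or `∞`, the quotient is `0`.
theorem famine_of_favorable_biasing_distributions_general {B : Type*} [Fintype B]
    {ν : Measure (B → ℝ)} (hν : IsExchangeable ν) {q : B → ℝ} (hq : ∀ f, 0 ≤ q f)
    {p qmin : ℝ} (hpos : 0 < p + qmin) :
    ν.real {D ∈ stdSimplex ℝ B | qmin ≤ ∑ f, D f * q f - p} / ν.real (stdSimplex ℝ B)
      ≤ (1 / Fintype.card B * ∑ f, q f) / (p + qmin) := by
  have hmean : 0 ≤ 1 / Fintype.card B * ∑ f, q f :=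
    mul_nonneg (by positivity) (Finset.sum_nonneg fun f _ ↦ hq f)
  simp only [le_sub_iff_add_le', Measure.real, ← ENNReal.toReal_div]
  exact ENNReal.toReal_le_of_le_ofReal (by positivity) (hν.measure_stdSimplex_ge_div_le hq hpos)

/-- **Famine of Favorable Biasing Distributions.**
Let `P` be the standard simplex of distributions over a finite set `B` of
information resources (`|B| = m`), viewed inside `EuclideanSpace ℝ B` and
equipped with the `(m-1)`-dimensional Hausdorff (Lebesgue) measure on the
affine hyperplane containing it.  For `G_{t,q_min} = {D ∈ P : bias(D,t) ≥ q_min}`,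
`μ(G_{t,q_min})/μ(P) ≤ (p + bias(B,t))/q_min`. -/
theorem famine_of_favorable_biasing_distributions
    {Ω B : Type*} [Fintype Ω] [Fintype B]
    (m : ℕ) (hm : Fintype.card B = m)
    (Pbar : B → Ω → ℝ)
    (hP0 : ∀ f ω, 0 ≤ Pbar f ω)
    (hP1 : ∀ f, ∑ ω, Pbar f ω = 1)
    (t : Finset Ω) (k : ℕ) (hk : t.card = k)
    (p : ℝ) (hp : p = (k : ℝ) / (Fintype.card Ω))
    (qmin : ℝ) (hqmin : qmin ∈ Set.Ioc (0 : ℝ) 1)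
    (biasB : ℝ)
    (hbiasB : biasB = (1 / (m : ℝ)) * (∑ f, ∑ ω ∈ t, Pbar f ω) - p)
    (Pset G : Set (EuclideanSpace ℝ B))
    (hPset : Pset = {D | (∀ f, 0 ≤ D f) ∧ ∑ f, D f = 1})
    (hG : G = {D ∈ Pset | qmin ≤ (∑ f, D f * ∑ ω ∈ t, Pbar f ω) - p}) :
    (μH[(m : ℝ) - 1] G).toReal / (μH[(m : ℝ) - 1] Pset).toReal
      ≤ (p + biasB) / qmin := by
  subst hm hPset hG
  have hp0 : 0 ≤ p := hp ▸ by positivity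
  have hq : ∀ f, 0 ≤ ∑ ω ∈ t, Pbar f ω := fun f ↦ Finset.sum_nonneg fun ω _ ↦ hP0 f ω
  have hbound := famine_of_favorable_biasing_distributions_general
    (isExchangeable_map_ofLp_hausdorffMeasure B (Fintype.card B - 1)) hq
    (add_pos_of_nonneg_of_pos hp0 hqmin.1)
  simp only [Measure.real, map_ofLp_apply] at hbound
  rw [hbiasB, add_sub_cancel]
  refine hbound.trans (div_le_div_of_nonneg_left ?_ hqmin.1 (le_add_of_nonneg_left hp0))
  exact mul_nonneg (by positivity) (Finset.sum_nonneg fun f _ ↦ hq f)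
end

section
/- Upper bound on entropic expressivity given bias: Let P be a probability distribution on a finite set Ω with |Ω| = n, let t ⊆ Ω with |t| = k where 1 ≤ k < n, let p = k/n, and suppose ∑_{ω∈t} P(ω) = p + ε with 0 < p + ε < 1. Then the Shannon entropy (base 2) of P satisfies H(P) ≤ (p + ε)·log₂(k/(p + ε)) + (1 − (p + ε))·log₂((n − k)/(1 − (p + ε))). -/
/-!
Split the entropy into its contributions from `t` and from `tᶜ`. Since `x ↦ -x * log x` is concave,
Jensen's inequality bounds the contribution of a block by the value attained when the mass of the
block is spread uniformly over its points.
-/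

open Finset Real

theorem sum_negMulLog_le {ι : Type*} {s : Finset ι} {f : ι → ℝ} (hf : ∀ i ∈ s, 0 ≤ f i) :
    ∑ i ∈ s, negMulLog (f i) ≤ (∑ i ∈ s, f i) * log (#s / ∑ i ∈ s, f i) := by
  obtain rfl | hs := s.eq_empty_or_nonempty
  · simp
  have card_pos : (0 : ℝ) < #s := by exact_mod_cast hs.card_pos
  have jensen : ∑ i ∈ s, (#s : ℝ)⁻¹ * negMulLog (f i) ≤
      negMulLog (∑ i ∈ s, (#s : ℝ)⁻¹ * f i) :=
    concaveOn_negMulLog.le_map_sum (fun _ _ ↦ by positivity)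
      (by rw [sum_const, nsmul_eq_mul, mul_inv_cancel₀ card_pos.ne']) hf
  rw [← mul_sum, ← mul_sum, inv_mul_le_iff₀ card_pos] at jensen
  calc ∑ i ∈ s, negMulLog (f i)
      ≤ #s * negMulLog ((#s : ℝ)⁻¹ * ∑ i ∈ s, f i) := jensen
    _ = (∑ i ∈ s, f i) * log (#s / ∑ i ∈ s, f i) := by
        rw [negMulLog, ← inv_div (∑ i ∈ s, f i), log_inv, div_eq_inv_mul]
        field_simp

theorem neg_sum_mul_logb_le {ι : Type*} {s : Finset ι} {f : ι → ℝ} {b : ℝ} (hb : 1 < b)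
    (hf : ∀ i ∈ s, 0 ≤ f i) :
    -∑ i ∈ s, f i * logb b (f i) ≤ (∑ i ∈ s, f i) * logb b (#s / ∑ i ∈ s, f i) := by
  calc -∑ i ∈ s, f i * logb b (f i)
      = (∑ i ∈ s, negMulLog (f i)) / log b := by
        simp only [negMulLog_eq_neg, sum_neg_distrib, neg_div, sum_div, logb, mul_div_assoc]
    _ ≤ ((∑ i ∈ s, f i) * log (#s / ∑ i ∈ s, f i)) / log b :=
        div_le_div_of_nonneg_right (sum_negMulLog_le hf) (log_pos hb).le
    _ = (∑ i ∈ s, f i) * logb b (#s / ∑ i ∈ s, f i) := mul_div_assoc ..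

/-- **Upper bound on entropic expressivity given bias.**
If a probability distribution `P` on a finite set `Ω` of size `n` places total
mass `p + ε` on a target set `t` of size `k` (where `1 ≤ k < n`, `p = k/n`,
`0 < p + ε < 1`), then its Shannon entropy (base 2) is at most
`(p+ε)·log₂(k/(p+ε)) + (1-(p+ε))·log₂((n-k)/(1-(p+ε)))`. -/
theorem entropic_expressivity_upper_bound
    {Ω : Type*} [Fintype Ω] (n : ℕ) (hn : Fintype.card Ω = n)
    (P : Ω → ℝ) (hP0 : ∀ ω, 0 ≤ P ω) (hP1 : ∑ ω, P ω = 1)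
    (t : Finset Ω) (k : ℕ) (hk : t.card = k)
    (hk1 : 1 ≤ k) (hk2 : k < n)
    (p ε : ℝ) (hp : p = (k : ℝ) / (n : ℝ))
    (hmass : ∑ ω ∈ t, P ω = p + ε)
    (h0 : 0 < p + ε) (h1 : p + ε < 1) :
    -∑ ω, P ω * Real.logb 2 (P ω)
      ≤ (p + ε) * Real.logb 2 ((k : ℝ) / (p + ε))
        + (1 - (p + ε)) * Real.logb 2 (((n : ℝ) - (k : ℝ)) / (1 - (p + ε))) := by
  classical
  have complement_mass : ∑ ω ∈ tᶜ, P ω = 1 - (p + ε) :=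
    eq_sub_of_add_eq' (by rw [← hmass, sum_add_sum_compl, hP1])
  have complement_card : (#tᶜ : ℝ) = n - k := by
    rw [card_compl, hn, hk, Nat.cast_sub hk2.le]
  have target_entropy := neg_sum_mul_logb_le one_lt_two fun ω (_ : ω ∈ t) ↦ hP0 ω
  have complement_entropy := neg_sum_mul_logb_le one_lt_two fun ω (_ : ω ∈ tᶜ) ↦ hP0 ω
  rw [hmass, hk] at target_entropy
  rw [complement_mass, complement_card] at complement_entropy
  rw [← sum_add_sum_compl t, neg_add]
  exact add_le_add target_entropy complement_entropy
end

section
/- Bias-Expressivity Trade-off: Let D be a probability distribution over a set of information resources, let t ⊆ Ω be a fixed target set with |t| = k and p = k/|Ω|, and let P̄_D = E_{F∼D}[P̄_F] be the expected averaged probability distribution on Ω. Then bias(D, t)² ≤ (1/2)·D_KL(P̄_D ∥ U) = (1/2)·(log₂|Ω| − H(P̄_D)), where U is the uniform distribution on Ω; equivalently, the entropic expressivity satisfies H(P̄_D) ≤ log₂|Ω| − 2·bias(D, t)², and bias(D, t) ≤ √((1/2)(log₂|Ω| − H(P̄_D))). -/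
/-!
The bias is the difference of the masses of `t` under `P̄_D` and under the uniform distribution, so
the trade-off is an instance of Pinsker's inequality. The Donsker–Varadhan bound
`∫ g ∂μ ≤ KL(μ ‖ ν) + log ∫ exp g ∂ν`, applied to all multiples `g = s X` of a variable `X` that is
sub-Gaussian under `ν`, makes a quadratic polynomial in `s` nonnegative; its discriminant bounds
`(∫ X ∂μ)²` by the divergence. Hoeffding's lemma makes the centred indicator of `t` sub-Gaussian.
This bounds the divergence in nats, and the one in bits is larger because `log 2 ≤ 1`.
-/

open MeasureTheory

section Pinsker

open ProbabilityTheory InformationTheory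
open scoped NNReal

variable {α : Type*} [MeasurableSpace α] {μ ν : Measure α} [IsProbabilityMeasure μ]
  [IsProbabilityMeasure ν]

lemma integral_sub_log_integral_exp_le_toReal_klDiv {g : α → ℝ} (h : klDiv μ ν ≠ ⊤)
    (hgμ : Integrable g μ) (hgν : Integrable (fun x ↦ Real.exp (g x)) ν) :
    ∫ x, g x ∂μ - Real.log (∫ x, Real.exp (g x) ∂ν) ≤ (klDiv μ ν).toReal := by
  obtain ⟨hμν, hllr⟩ := klDiv_ne_top_iff.mp h
  have : IsProbabilityMeasure (ν.tilted g) := isProbabilityMeasure_tilted hgν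
  have hgibbs := integral_llr_add_sub_measure_univ_nonneg
    (hμν.trans (absolutelyContinuous_tilted hgν)) (integrable_llr_tilted_right hμν hgμ hllr hgν)
  rw [integral_llr_tilted_right hμν hgμ hgν hllr] at hgibbs
  rw [toReal_klDiv_of_measure_eq hμν (by simp)]
  simp only [probReal_univ] at hgibbs
  linarith

lemma sq_integral_le_of_hasSubgaussianMGF {X : α → ℝ} {c : ℝ≥0} (h : klDiv μ ν ≠ ⊤)
    (hX : HasSubgaussianMGF X c ν) (hXμ : Integrable X μ) :
    (∫ x, X x ∂μ) ^ 2 ≤ 2 * c * (klDiv μ ν).toReal := by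
  have hquad (s : ℝ) :
      0 ≤ (c / 2 : ℝ) * (s * s) + -(∫ x, X x ∂μ) * s + (klDiv μ ν).toReal := by
    have hDV := integral_sub_log_integral_exp_le_toReal_klDiv h (hXμ.const_mul s)
      (hX.integrable_exp_mul s)
    have hcgf := hX.cgf_le s
    rw [integral_const_mul] at hDV
    rw [cgf, mgf] at hcgf
    linarith
  have hdiscrim := discrim_le_zero hquad
  rw [discrim] at hdiscrim
  linarith

lemma sq_integral_sub_integral_le_of_mem_Icc {X : α → ℝ} {a b : ℝ} (h : klDiv μ ν ≠ ⊤)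
    (hX : AEMeasurable X ν) (hab : ∀ᵐ x ∂ν, X x ∈ Set.Icc a b) :
    (∫ x, X x ∂μ - ∫ x, X x ∂ν) ^ 2 ≤ (b - a) ^ 2 / 2 * (klDiv μ ν).toReal := by
  have hμν : μ ≪ ν := (klDiv_ne_top_iff.mp h).1
  have hXμ : Integrable X μ := .of_mem_Icc a b (hX.mono_ac hμν) (hμν.ae_le hab)
  have hcentred := sq_integral_le_of_hasSubgaussianMGF h (hasSubgaussianMGF_of_mem_Icc hX hab)
    (hXμ.sub (integrable_const _))
  rw [integral_sub hXμ (integrable_const _), integral_const, probReal_univ, one_smul] at hcentred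
  convert hcentred using 2
  simp only [NNReal.coe_pow, NNReal.coe_div, coe_nnnorm, Real.norm_eq_abs, NNReal.coe_ofNat,
    div_pow, sq_abs]
  ring

lemma two_mul_sq_measureReal_sub_le_toReal_klDiv {s : Set α} (h : klDiv μ ν ≠ ⊤)
    (hs : MeasurableSet s) : 2 * (μ.real s - ν.real s) ^ 2 ≤ (klDiv μ ν).toReal := by
  have hmem (x : α) : s.indicator (1 : α → ℝ) x ∈ Set.Icc (0 : ℝ) 1 :=
    ⟨Set.indicator_nonneg (fun _ _ ↦ zero_le_one) x, Set.indicator_le_self' (by simp) x⟩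
  have hind := sq_integral_sub_integral_le_of_mem_Icc h
    (measurable_one.indicator hs).aemeasurable (ae_of_all ν hmem)
  rw [integral_indicator_one hs, integral_indicator_one hs] at hind
  linarith

end Pinsker

section Discrete

open ProbabilityTheory InformationTheory

variable {Ω : Type*}

section Measure

variable [MeasurableSpace Ω] [MeasurableSingletonClass Ω]

lemma measureReal_singleton_mul_toReal_rnDeriv {μ ν : Measure Ω} [SigmaFinite μ] [SigmaFinite ν]
    (hμν : μ ≪ ν) (ω : Ω) : ν.real {ω} * (μ.rnDeriv ν ω).toReal = μ.real {ω} := by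
  rw [← Measure.setIntegral_toReal_rnDeriv hμν, integral_singleton, smul_eq_mul]

lemma absolutelyContinuous_uniformOn_univ [Finite Ω] (μ : Measure Ω) :
    μ ≪ uniformOn (Set.univ : Set Ω) := fun s hs ↦ by
  rw [uniformOn_eq_zero_iff Set.finite_univ, Set.univ_inter] at hs
  rw [hs, measure_empty]

variable [Fintype Ω]

lemma toReal_klDiv_eq_sum {μ ν : Measure Ω} [IsProbabilityMeasure μ] [IsProbabilityMeasure ν]
    (hμν : μ ≪ ν) :
    (klDiv μ ν).toReal = ∑ ω, μ.real {ω} * Real.log (μ.real {ω} / ν.real {ω}) := by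
  rw [toReal_klDiv_of_measure_eq hμν (by simp), integral_fintype .of_finite]
  refine Finset.sum_congr rfl fun ω _ ↦ ?_
  have hdensity := measureReal_singleton_mul_toReal_rnDeriv hμν ω
  by_cases hω : ν.real {ω} = 0
  · simp [← hdensity, hω]
  · rw [smul_eq_mul, llr, ← hdensity, mul_div_cancel_left₀ _ hω]

lemma uniformOn_univ_real_finset (t : Finset Ω) :
    (uniformOn (Set.univ : Set Ω)).real t = t.card / Fintype.card Ω := by
  simp [measureReal_def, uniformOn_univ, Measure.count_apply_finset]

lemma toReal_klDiv_uniformOn_univ (μ : Measure Ω) [IsProbabilityMeasure μ] :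
    (klDiv μ (uniformOn Set.univ)).toReal
      = Real.log (Fintype.card Ω) - ∑ ω, Real.negMulLog (μ.real {ω}) := by
  have : Nonempty Ω := nonempty_of_isProbabilityMeasure μ
  have hsum : ∑ ω, μ.real {ω} = 1 := by
    rw [sum_measureReal_singleton, Finset.coe_univ, probReal_univ]
  have hterm (ω : Ω) :
      μ.real {ω} * Real.log (μ.real {ω} / (uniformOn (Set.univ : Set Ω)).real {ω})
        = μ.real {ω} * Real.log (Fintype.card Ω) - Real.negMulLog (μ.real {ω}) := by
    have hunif := uniformOn_univ_real_finset ({ω} : Finset Ω)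
    rw [Finset.coe_singleton, Finset.card_singleton, Nat.cast_one] at hunif
    by_cases hω : μ.real {ω} = 0
    · simp [hω]
    · rw [hunif, div_div_eq_mul_div, div_one, Real.log_mul hω (by simp), Real.negMulLog]
      ring
  simp_rw [toReal_klDiv_eq_sum (absolutelyContinuous_uniformOn_univ μ), hterm]
  rw [Finset.sum_sub_distrib, ← Finset.sum_mul, hsum, one_mul]

end Measure

variable [Fintype Ω] {Q : Ω → ℝ}

lemma exists_isProbabilityMeasure_real_singleton_eq [MeasurableSpace Ω]
    [MeasurableSingletonClass Ω] (hQ : Q ∈ stdSimplex ℝ Ω) :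
    ∃ μ : Measure Ω, IsProbabilityMeasure μ ∧ ∀ ω, μ.real {ω} = Q ω := by
  let P : PMF Ω := .ofFintype (fun ω ↦ ENNReal.ofReal (Q ω)) (by
    rw [← ENNReal.ofReal_sum_of_nonneg fun ω _ ↦ hQ.1 ω, hQ.2, ENNReal.ofReal_one])
  refine ⟨P.toMeasure, inferInstance, fun ω ↦ ?_⟩
  rw [measureReal_def, P.toMeasure_apply_singleton ω (measurableSet_singleton ω),
    PMF.ofFintype_apply, ENNReal.toReal_ofReal (hQ.1 ω)]

lemma two_mul_sq_sum_sub_le_log_card_sub_sum_negMulLog (hQ : Q ∈ stdSimplex ℝ Ω)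
    (t : Finset Ω) :
    2 * (∑ ω ∈ t, Q ω - t.card / Fintype.card Ω) ^ 2
      ≤ Real.log (Fintype.card Ω) - ∑ ω, Real.negMulLog (Q ω) := by
  let _ : MeasurableSpace Ω := ⊤
  have : MeasurableSingletonClass Ω := ⟨fun _ ↦ trivial⟩
  obtain ⟨μ, _, hμ⟩ := exists_isProbabilityMeasure_real_singleton_eq hQ
  have : Nonempty Ω := nonempty_of_isProbabilityMeasure μ
  have hfinite : klDiv μ (uniformOn Set.univ) ≠ ⊤ :=
    klDiv_ne_top (absolutelyContinuous_uniformOn_univ μ) .of_finite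
  have hpinsker := two_mul_sq_measureReal_sub_le_toReal_klDiv hfinite t.measurableSet
  rw [toReal_klDiv_uniformOn_univ, uniformOn_univ_real_finset, ← sum_measureReal_singleton]
    at hpinsker
  simpa only [hμ] using hpinsker

lemma two_mul_sq_sum_sub_le_logb_card_add_sum_mul_logb {b : ℝ} (hb : 1 < b)
    (hbe : b ≤ Real.exp 1) (hQ : Q ∈ stdSimplex ℝ Ω) (t : Finset Ω) :
    2 * (∑ ω ∈ t, Q ω - t.card / Fintype.card Ω) ^ 2
      ≤ Real.logb b (Fintype.card Ω) + ∑ ω, Q ω * Real.logb b (Q ω) := by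
  have hlog : Real.log b ≤ 1 := (Real.log_le_iff_le_exp (by linarith)).mpr hbe
  have hbase : Real.logb b (Fintype.card Ω) + ∑ ω, Q ω * Real.logb b (Q ω)
      = (Real.log (Fintype.card Ω) - ∑ ω, Real.negMulLog (Q ω)) / Real.log b := by
    simp only [Real.logb, Real.negMulLog, neg_mul, Finset.sum_neg_distrib, sub_neg_eq_add,
      add_div, Finset.sum_div, mul_div_assoc]
  rw [hbase, le_div_iff₀ (Real.log_pos hb)]
  exact (mul_le_of_le_one_right (by positivity) hlog).trans
    (two_mul_sq_sum_sub_le_log_card_sub_sum_negMulLog hQ t)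

end Discrete

lemma integral_mem_stdSimplex {Ω F : Type*} [Fintype Ω] [MeasurableSpace F]
    {D : Measure F} [IsProbabilityMeasure D] {P : F → Ω → ℝ}
    (hP : ∀ᵐ f ∂D, P f ∈ stdSimplex ℝ Ω) (hint : ∀ ω, Integrable (fun f ↦ P f ω) D) :
    (fun ω ↦ ∫ f, P f ω ∂D) ∈ stdSimplex ℝ Ω := by
  have hmean := (convex_stdSimplex ℝ Ω).integral_mem (isClosed_stdSimplex ℝ Ω) hP
    (.of_eval hint)
  convert hmean using 2 with ω
  exact (eval_integral hint ω).symm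

/-- **Bias-Expressivity Trade-off.**
With `P̄_D = E_{F∼D}[P̄_F]` the expected averaged distribution on `Ω`,
`bias(D,t)² ≤ (1/2)·D_KL(P̄_D ∥ U) = (1/2)(log₂|Ω| - H(P̄_D))`; equivalently
`H(P̄_D) ≤ log₂|Ω| - 2·bias(D,t)²` and
`bias(D,t) ≤ √((1/2)(log₂|Ω| - H(P̄_D)))`.
(Here `D_KL(P ∥ U) = log₂|Ω| - H(P)` for the uniform distribution `U`.) -/
theorem bias_expressivity_tradeoff
    {Ω F : Type*} [Fintype Ω] [MeasurableSpace F]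
    (Pbar : F → Ω → ℝ)
    (hP0 : ∀ f ω, 0 ≤ Pbar f ω)
    (hP1 : ∀ f, ∑ ω, Pbar f ω = 1)
    (D : Measure F) [IsProbabilityMeasure D]
    (hint : ∀ ω, Integrable (fun f => Pbar f ω) D)
    (t : Finset Ω) (k : ℕ) (hk : t.card = k)
    (p : ℝ) (hp : p = (k : ℝ) / (Fintype.card Ω))
    (PbarD : Ω → ℝ) (hPbarD : ∀ ω, PbarD ω = ∫ f, Pbar f ω ∂D)
    (bias : ℝ) (hbias : bias = (∑ ω ∈ t, PbarD ω) - p)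
    (HPD : ℝ) (hHPD : HPD = -∑ ω, PbarD ω * Real.logb 2 (PbarD ω)) :
    bias ^ 2 ≤ (1 / 2) * (Real.logb 2 (Fintype.card Ω) - HPD)
    ∧ HPD ≤ Real.logb 2 (Fintype.card Ω) - 2 * bias ^ 2
    ∧ bias ≤ Real.sqrt ((1 / 2) * (Real.logb 2 (Fintype.card Ω) - HPD)) := by
  have hsimplex : PbarD ∈ stdSimplex ℝ Ω := by
    rw [funext hPbarD]
    exact integral_mem_stdSimplex (ae_of_all D fun f ↦ ⟨hP0 f, hP1 f⟩) hint
  have hpinsker := two_mul_sq_sum_sub_le_logb_card_add_sum_mul_logb one_lt_two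
    (by linarith [Real.exp_one_gt_d9]) hsimplex t
  rw [hk, ← hp, ← hbias, ← sub_neg_eq_add, ← hHPD] at hpinsker
  have hbound : bias ^ 2 ≤ (1 / 2) * (Real.logb 2 (Fintype.card Ω) - HPD) := by linarith
  exact ⟨hbound, by linarith, Real.le_sqrt_of_sq_le hbound⟩
end
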